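/- Let M ≥ 3 be an integer and 0 < p < 1/(64M²). Then ℙ_p(ξ : χ(ξ) < ∞) = 1 and ℙ_p(ξ : χ(ξ) = 0) > 0. -/

import Mathlib

open Filter Set MeasureTheory
open scoped ENNReal NNReal

namespace Paper

/-! ### Binary sequences and compatibility -/

/-- Delete the `i`-th entry of a sequence, shifting everything to the right of it
one step to the left. -/
def deleteAt {α : Type*} (ξ : ℕ → α) (i : ℕ) : ℕ → α :=
  fun j => if j < i then ξ j else ξ (j + 1)

/-- The annihilation operator `Δ_i^0` on binary sequences: delete the `i`-th digit
if it is a zero (`false`), otherwise do nothing. -/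
def delta0 (ξ : ℕ → Bool) (i : ℕ) : ℕ → Bool :=
  if ξ i = false then deleteAt ξ i else ξ

/-- The annihilation operator `Δ_i^1` on binary sequences: delete the `i`-th digit
if it is a one (`true`), otherwise do nothing. -/
def delta1 (ξ : ℕ → Bool) (i : ℕ) : ℕ → Bool :=
  if ξ i = true then deleteAt ξ i else ξ

/-- `Reach1 η η'` : `η'` is obtained from `η` by finitely many applications of
operators `Δ_·^1`. -/
def Reach1 : (ℕ → Bool) → (ℕ → Bool) → Prop :=
  Relation.ReflTransGen fun a b => ∃ i, b = delta1 a i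

/-- `Reach0 ξ ξ'` : `ξ'` is obtained from `ξ` by finitely many applications of
operators `Δ_·^0`. -/
def Reach0 : (ℕ → Bool) → (ℕ → Bool) → Prop :=
  Relation.ReflTransGen fun a b => ∃ i, b = delta0 a i

/-- Compatibility of an ordered pair of binary sequences: one can delete ones from `η`
and zeroes from `ξ` so that the resulting sequences converge (in the product topology)
to a common limit. -/
def Compatible (η ξ : ℕ → Bool) : Prop :=
  ∃ (ηs ξs : ℕ → ℕ → Bool) (l : ℕ → Bool),
    (∀ k, Reach1 η (ηs k)) ∧ (∀ k, Reach0 ξ (ξs k)) ∧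
      Tendsto ηs atTop (nhds l) ∧ Tendsto ξs atTop (nhds l)

/-- `μ` is the product Bernoulli measure on `{0,1}^ℕ` with parameter `p`. -/
def IsBernoulliProduct (μ : Measure (ℕ → Bool)) (p : ℝ) : Prop :=
  IsProbabilityMeasure μ ∧
    ∀ (s : Finset ℕ) (b : ℕ → Bool),
      μ {ξ | ∀ i ∈ s, ξ i = b i} = ∏ i ∈ s, ENNReal.ofReal (if b i then p else 1 - p)

/-- The set `Ξ_∞` of binary sequences with infinitely many ones and infinitely many
zeroes. -/
def Xinf (ξ : ℕ → Bool) : Prop :=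
  (∀ n, ∃ m, n ≤ m ∧ ξ m = true) ∧ ∀ n, ∃ m, n ≤ m ∧ ξ m = false

/-- Length of the run of ones of `ξ` starting at position `n` (junk value `0` if the
run is infinite). -/
noncomputable def runLen (ξ : ℕ → Bool) (n : ℕ) : ℕ :=
  letI := Classical.dec (∃ k, ξ (n + k) = false)
  if h : ∃ k, ξ (n + k) = false then Nat.find h else 0

/-- The position in `ξ` at which the `j`-th letter of the weighted word `f ξ` starts. -/
noncomputable def fpos (ξ : ℕ → Bool) : ℕ → ℕ
  | 0 => 0
  | j + 1 => fpos ξ j + max (runLen ξ (fpos ξ j)) 1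

/-- The run-length map `f : Ξ_∞ → Ψ`, replacing each maximal run of ones by a single
letter whose weight is the length of the run (zeroes being kept as letters of
weight `0`). -/
noncomputable def fmap (ξ : ℕ → Bool) : ℕ → ℕ :=
  fun j => runLen ξ (fpos ξ j)

/-! ### Weighted words -/

/-- The set `Ψ` of weighted words: a weight `≥ 1` is always followed by a weight `0`. -/
def Psi (ψ : ℕ → ℕ) : Prop := ∀ i, 1 ≤ ψ i → ψ (i + 1) = 0

/-- The annihilation operator `Δ_i^0` on weighted words. -/
def pdelta0 (ψ : ℕ → ℕ) (i : ℕ) : ℕ → ℕ :=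
  if ψ i ≠ 0 then ψ
  else if i = 0 ∨ ψ (i - 1) = 0 ∨ ψ (i + 1) = 0 then deleteAt ψ i
  else fun j => if j + 1 < i then ψ j else if j + 1 = i then ψ (i - 1) + ψ (i + 1) else ψ (j + 2)

/-- The annihilation operator `Δ_i^1` on weighted words. -/
def pdelta1 (ψ : ℕ → ℕ) (i : ℕ) : ℕ → ℕ :=
  if ψ i = 0 then ψ
  else if ψ i = 1 then deleteAt ψ i
  else Function.update ψ i (ψ i - 1)

/-- Finitely many applications of operators `Δ_·^1` on weighted words. -/
def PReach1 : (ℕ → ℕ) → (ℕ → ℕ) → Prop :=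
  Relation.ReflTransGen fun a b => ∃ i, b = pdelta1 a i

/-- Finitely many applications of operators `Δ_·^0` on weighted words. -/
def PReach0 : (ℕ → ℕ) → (ℕ → ℕ) → Prop :=
  Relation.ReflTransGen fun a b => ∃ i, b = pdelta0 a i

/-- Compatibility of an ordered pair of weighted words. -/
def CompatibleP (ζ ψ : ℕ → ℕ) : Prop :=
  ∃ (ζs ψs : ℕ → ℕ → ℕ) (l : ℕ → ℕ),
    (∀ k, PReach1 ζ (ζs k)) ∧ (∀ k, PReach0 ψ (ψs k)) ∧
      (∀ k, Psi (ζs k)) ∧ (∀ k, Psi (ψs k)) ∧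
      Tendsto ζs atTop (nhds l) ∧ Tendsto ψs atTop (nhds l)

/-! ### The oriented percolation process -/

/-- Oriented edges of the graph `G`: from `u` to `u + (0,1)` and from `u` to `u + (1,1)`. -/
def IsStep (u v : ℕ × ℕ) : Prop :=
  (v.1 = u.1 ∧ v.2 = u.2 + 1) ∨ (v.1 = u.1 + 1 ∧ v.2 = u.2 + 1)

/-- Open vertices of the configuration `ω_{ζ,ψ}`.  (Sequences are `0`-indexed in this
formalization, so the entry of `ζ` at the paper's position `v₁ ≥ 1` is `ζ (v₁ - 1)`.) -/
def OpenV (ζ ψ : ℕ → ℕ) (v : ℕ × ℕ) : Prop :=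
  v = (0, 0) ∨ (1 ≤ v.1 ∧ 1 ≤ v.2 ∧ ψ (v.2 - 1) ≤ ζ (v.1 - 1))

/-- Heavy vertices: `v₂ = 0`, or the row weight `ψ_{v₂}` is positive. -/
def Heavy (ψ : ℕ → ℕ) (v : ℕ × ℕ) : Prop := v.2 = 0 ∨ 1 ≤ ψ (v.2 - 1)

/-- `π 0, π 1, …, π n` is an open oriented path in `ω_{ζ,ψ}`. -/
def IsOpenPath (ζ ψ : ℕ → ℕ) (π : ℕ → ℕ × ℕ) (n : ℕ) : Prop :=
  (∀ i < n, IsStep (π i) (π (i + 1))) ∧ ∀ i ≤ n, OpenV ζ ψ (π i)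

/-- The path `π 0, …, π n` is permitted: any two distinct heavy vertices on it have
different first coordinates. -/
def IsPermitted (ψ : ℕ → ℕ) (π : ℕ → ℕ × ℕ) (n : ℕ) : Prop :=
  ∀ i ≤ n, ∀ j ≤ n, π i ≠ π j → Heavy ψ (π i) → Heavy ψ (π j) → (π i).1 ≠ (π j).1

/-- There is an infinite open permitted oriented path starting from the origin in the
percolation configuration `ω_{ζ,ψ}`. -/
def InfOpenPermitted (ζ ψ : ℕ → ℕ) : Prop :=
  ∃ π : ℕ → ℕ × ℕ, π 0 = (0, 0) ∧ (∀ n, IsStep (π n) (π (n + 1))) ∧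
    (∀ n, OpenV ζ ψ (π n)) ∧
    ∀ i j, π i ≠ π j → Heavy ψ (π i) → Heavy ψ (π j) → (π i).1 ≠ (π j).1

/-- `V_{⟨ζ,ψ⟩}(c)`: vertices in row `c` reachable from the origin by an open permitted
oriented path. -/
def Vset (ζ ψ : ℕ → ℕ) (c : ℕ) : Set (ℕ × ℕ) :=
  {v | v.2 = c ∧ ∃ (π : ℕ → ℕ × ℕ) (n : ℕ), π 0 = (0, 0) ∧ π n = v ∧
    IsOpenPath ζ ψ π n ∧ IsPermitted ψ π n}

/-- The open oriented cluster of the origin in `ω_{ζ,ψ}`. -/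
def ClusterO (ζ ψ : ℕ → ℕ) : Set (ℕ × ℕ) :=
  {v | ∃ (π : ℕ → ℕ × ℕ) (n : ℕ), π 0 = (0, 0) ∧ π n = v ∧ IsOpenPath ζ ψ π n}

/-- The horizontal slab `S_{[a,b]}`. -/
def Slab (a b : ℕ) : Set (ℕ × ℕ) := {v | a ≤ v.2 ∧ v.2 ≤ b}

/-- The horizontal discrete segment in row `c` with endpoints `a` and `b`. -/
def HSeg (c a b : ℕ) : Set (ℕ × ℕ) := {v | v.2 = c ∧ a ≤ v.1 ∧ v.1 ≤ b}

/-- The shift `θ_m`. -/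
def shiftSeq (m : ℕ) (ψ : ℕ → ℕ) : ℕ → ℕ := fun j => ψ (j + m)

/-- The hierarchical weighted word `ζ(L)`: the letter at the paper's position
`j ≥ 1` (Lean index `j - 1`) has weight `k` iff `L^k ∣ j` and `L^{k+1} ∤ j`. -/
noncomputable def zetaL (L : ℕ) : ℕ → ℕ := fun j => sSup {k | L ^ k ∣ j + 1}

/-- Lean indices at which `ψ` has an entry `≥ k`. -/
def idxSet (ψ : ℕ → ℕ) (k : ℕ) : Set ℕ := {n | k ≤ ψ n}

/-- `i_k(ψ)`: the first (1-based, as in the paper) position at which `ψ` has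
an entry `≥ k` (meaningful when `idxSet ψ k` is nonempty). -/
noncomputable def idx (ψ : ℕ → ℕ) (k : ℕ) : ℕ := sInf (idxSet ψ k) + 1

/-- Condition a) of being `M`-spaced. -/
def CondA (M : ℕ) (ψ : ℕ → ℕ) : Prop := ∀ i j : ℕ, i < j → M ^ min (ψ i) (ψ j) ≤ j - i

/-- `ψ ∈ Ψ_M^k` : `ψ` is `M`-spaced up to level `k`. -/
def SpacedUpTo (M k : ℕ) (ψ : ℕ → ℕ) : Prop :=
  Psi ψ ∧ CondA M ψ ∧ ∀ j, 1 ≤ j → j ≤ k → (idxSet ψ j).Nonempty → M ^ j ≤ idx ψ j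

/-- `ψ ∈ Ψ_M` : `ψ` is `M`-spaced. -/
def Spaced (M : ℕ) (ψ : ℕ → ℕ) : Prop :=
  Psi ψ ∧ CondA M ψ ∧ ∀ j, 1 ≤ j → (idxSet ψ j).Nonempty → M ^ j ≤ idx ψ j

/-! ### Discrete Hausdorff dimension (Barlow–Taylor) -/

/-- `ν_α(A, F)` with the normalizing diameter `dF` of `F` given explicitly; the
infimum is over countable covers of `A ∩ F` by integer intervals `[x, y)`. -/
noncomputable def nuBT (α : ℝ) (A F : Set ℤ) (dF : ℝ) : ℝ≥0∞ :=
  (⨅ (B : ℕ → ℤ × ℤ) (_ : A ∩ F ⊆ ⋃ i, Set.Ico (B i).1 (B i).2),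
      ∑' i, ENNReal.ofReal ((((B i).2 - (B i).1 : ℤ)) : ℝ) ^ α) /
    ENNReal.ofReal dF ^ α

/-- The annulus `I_n^{(r)}` (for `n ≥ 1`). -/
noncomputable def ringBT (r n : ℕ) : Set ℤ :=
  if n = 1 then Set.Ico (-(r : ℤ)) (r : ℤ)
  else Set.Ico (-((r : ℤ) ^ n)) ((r : ℤ) ^ n) \ Set.Ico (-((r : ℤ) ^ (n - 1))) ((r : ℤ) ^ (n - 1))

/-- `m_α^{(r)}(A) = ∑_{n ≥ 1} ν_α(A, I_n^{(r)})`. -/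
noncomputable def mBT (r : ℕ) (α : ℝ) (A : Set ℤ) : ℝ≥0∞ :=
  ∑' n : ℕ, nuBT α A (ringBT r (n + 1)) (2 * (r : ℝ) ^ (n + 1))

/-- The discrete (Barlow–Taylor) Hausdorff dimension of `A ⊆ ℤ`. -/
noncomputable def dimBT (r : ℕ) (A : Set ℤ) : ℝ :=
  sInf {α : ℝ | 0 < α ∧ mBT r α A < ⊤}

/-- The set of zeroes of a binary sequence, viewed inside `ℤ` (at the paper's
positions `1, 2, …`). -/
def zeroSetZ (η : ℕ → Bool) : Set ℤ := {i : ℤ | ∃ n : ℕ, i = (n : ℤ) + 1 ∧ η n = false}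

/-! ### The grouping construction -/

/-- A cluster together with its mass. -/
abbrev Clu : Type := Set ℕ × ℕ

/-- The set of (paper, i.e. 1-based) positions of the ones of `ξ`. -/
def Gamma (ξ : ℕ → Bool) : Set ℕ := {n | 1 ≤ n ∧ ξ (n - 1) = true}

/-- The span of a set: the smallest interval containing it. -/
noncomputable def spanI (C : Set ℕ) : Set ℕ := Set.Icc (sInf C) (sSup C)

/-- Euclidean distance between two sets of integers. -/
noncomputable def cluDist (C D : Set ℕ) : ℕ := sInf {d | ∃ a ∈ C, ∃ b ∈ D, d = Nat.dist a b}

/-- Diameter of a set of integers. -/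
noncomputable def sdiam (C : Set ℕ) : ℕ := sSup {d | ∃ a ∈ C, ∃ b ∈ C, d = Nat.dist a b}

/-- `C` lies entirely to the left of `D`. -/
def cluLT (C D : Set ℕ) : Prop := ∀ a ∈ C, ∀ b ∈ D, a < b

/-- `p` and `q` are adjacent clusters of the collection `B` (no cluster of `B` lies
strictly between them) at distance `< t`. -/
def adjStep (B : Set Clu) (t : ℕ) (p q : Clu) : Prop :=
  p ∈ B ∧ q ∈ B ∧ cluDist p.1 q.1 < t ∧
    ((cluLT p.1 q.1 ∧ ∀ r ∈ B, ¬(cluLT p.1 r.1 ∧ cluLT r.1 q.1)) ∨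
      (cluLT q.1 p.1 ∧ ∀ r ∈ B, ¬(cluLT q.1 r.1 ∧ cluLT r.1 p.1)))

/-- The maximal run (within the collection `B`, with gap threshold `t`) containing `p`. -/
def runOf (B : Set Clu) (t : ℕ) (p : Clu) : Set Clu :=
  {q ∈ B | Relation.ReflTransGen (adjStep B t) p q}

/-- `R` is a maximal run of length `≥ 2` of clusters of `B` with gap threshold `t`. -/
def IsRun (B : Set Clu) (t : ℕ) (R : Set Clu) : Prop :=
  ∃ p ∈ B, R = runOf B t p ∧ ∃ q ∈ R, q ≠ p

/-- The level-`(k+1)` cluster created from a maximal `(k+1)`-run `R`: its point set is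
`span(R) ∩ Γ`, and its mass is `∑ m(constituents) - k (n - 1)`. -/
noncomputable def runClu (Γ : Set ℕ) (k : ℕ) (R : Set Clu) : Clu :=
  (spanI (⋃ q ∈ R, q.1) ∩ Γ, (∑ᶠ q ∈ R, q.2) - k * (Nat.card R - 1))

/-- One step of the grouping construction: from the partition `𝐂_k` to `𝐂_{k+1}`. -/
noncomputable def nextPart (Γ : Set ℕ) (M k : ℕ) (S : Set Clu) : Set Clu :=
  {c | ∃ R, IsRun {q ∈ S | k + 1 ≤ q.2} (M ^ (k + 1)) R ∧ c = runClu Γ k R} ∪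
    {c ∈ S | ∀ R, IsRun {q ∈ S | k + 1 ≤ q.2} (M ^ (k + 1)) R →
      Disjoint c.1 (spanI (⋃ q ∈ R, q.1))}

/-- The partition `𝐂_k` of `Γ` into clusters with masses (grouping construction with
spacing parameter `M`). -/
noncomputable def parts (Γ : Set ℕ) (M : ℕ) : ℕ → Set Clu
  | 0 => {c | ∃ x ∈ Γ, c = ({x}, 1)}
  | k + 1 => nextPart Γ M k (parts Γ M k)

/-- `c` is a cluster of level `ℓ`: it appears in `𝐂_ℓ` and in no earlier partition. -/
def IsLevelCluster (Γ : Set ℕ) (M ℓ : ℕ) (c : Clu) : Prop :=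
  c ∈ parts Γ M ℓ ∧ ∀ k < ℓ, c ∉ parts Γ M k

/-- `κ(x) < ∞` : the levels of the clusters containing `x` are bounded. -/
def KappaFinite (Γ : Set ℕ) (M : ℕ) (x : ℕ) : Prop :=
  BddAbove {ℓ | ∃ c : Clu, IsLevelCluster Γ M ℓ c ∧ x ∈ c.1}

/-- The event `Ξ(p)` on which the grouping construction is well set:
`κ(x) < ∞` for every `x ∈ Γ(ξ)`. -/
def GoodSeq (M : ℕ) (ξ : ℕ → Bool) : Prop := ∀ x ∈ Gamma ξ, KappaFinite (Gamma ξ) M x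

/-- The collection `𝐂_∞` of maximal clusters: those that stay in `𝐂_k` forever. -/
def maxClusters (Γ : Set ℕ) (M : ℕ) : Set Clu :=
  {c | ∃ ℓ, ∀ k, ℓ ≤ k → c ∈ parts Γ M k}

/-- The defining condition of `χ(ξ) ≤ k` : every maximal cluster of mass `> k`
is at distance `≥ M^{mass}` from the origin.  (Positions are 1-based, so the distance
from a cluster to `0` is its smallest element.) -/
def ChiCond (Γ : Set ℕ) (M k : ℕ) : Prop :=
  ∀ c ∈ maxClusters Γ M, k < c.2 → M ^ c.2 ≤ sInf c.1

/-- The maximal cluster containing a given point (junk if there is none). -/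
noncomputable def maxCluOf (Γ : Set ℕ) (M : ℕ) (x : ℕ) : Clu :=
  letI := Classical.dec (∃ c : Clu, c ∈ maxClusters Γ M ∧ x ∈ c.1)
  if h : ∃ c : Clu, c ∈ maxClusters Γ M ∧ x ∈ c.1 then h.choose else (∅, 0)

/-- Enumeration of the maximal clusters in increasing order, together with the union
of those already enumerated. -/
noncomputable def enumAux (Γ : Set ℕ) (M : ℕ) : ℕ → Clu × Set ℕ
  | 0 => (maxCluOf Γ M (sInf Γ), (maxCluOf Γ M (sInf Γ)).1)
  | j + 1 =>
    (maxCluOf Γ M (sInf (Γ \ (enumAux Γ M j).2)),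
      (enumAux Γ M j).2 ∪ (maxCluOf Γ M (sInf (Γ \ (enumAux Γ M j).2))).1)

/-- The `j`-th maximal cluster `C_{∞,j}` (`j` is 0-based here). -/
noncomputable def enumClu (Γ : Set ℕ) (M : ℕ) (j : ℕ) : Clu := (enumAux Γ M j).1

/-- The start-point `x̂_j` of the `j`-th maximal cluster (`j` is 0-based here). -/
noncomputable def hatx (Γ : Set ℕ) (M : ℕ) : ℕ → ℕ
  | 0 => sInf Γ
  | j + 1 => sInf (Γ \ (enumAux Γ M j).2)

/-- The (1-based) position `x̂_j - ∑_{t<j} diam(C_{∞,t})` at which the entry of the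
`j`-th maximal cluster sits in the weighted word `ψ^ξ`. -/
noncomputable def cluPos (Γ : Set ℕ) (M : ℕ) (j : ℕ) : ℕ :=
  hatx Γ M j - ∑ t ∈ Finset.range j, sdiam (enumClu Γ M t).1

/-- The weighted word `ψ^ξ` associated to `ξ` by the grouping construction. -/
noncomputable def psiXi (M : ℕ) (ξ : ℕ → Bool) : ℕ → ℕ := fun i =>
  letI := Classical.dec (∃ j : ℕ, i + 1 = cluPos (Gamma ξ) M j)
  if h : ∃ j : ℕ, i + 1 = cluPos (Gamma ξ) M j then (enumClu (Gamma ξ) M h.choose).2 else 0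

/-- `ψ ⪯_M ζ`. -/
def PrecM (M : ℕ) (ψ ζ : ℕ → ℕ) : Prop :=
  ∀ j, (ψ j = 0 ↔ ζ j = 0) ∧ (1 ≤ ψ j → ψ j ≤ ζ j ∧ ζ j ≤ 3 * M ^ (ψ j - 1))

/-- The set `∪_i (span(C_{∞,i}) \ C_{∞,i})` of points to be deleted. -/
def Dset (Γ : Set ℕ) (M : ℕ) : Set ℕ := ⋃ c ∈ maxClusters Γ M, spanI c.1 \ c.1

/-- `j_n(ξ)` : the `n`-th (0-based) element of `Dset`, shifted by `n` to account for
the previous deletions (this is the paper's `j_{n+1}`, a 1-based position). -/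
noncomputable def jseq (Γ : Set ℕ) (M : ℕ) (n : ℕ) : ℕ := Nat.nth (· ∈ Dset Γ M) n - n

/-- The iterates `ξ^{(n)}` obtained by successively deleting the zeroes of `ξ`
lying inside spans of maximal clusters. -/
noncomputable def xiIter (M : ℕ) (ξ : ℕ → Bool) : ℕ → ℕ → Bool
  | 0 => ξ
  | n + 1 => delta0 (xiIter M ξ n) (jseq (Gamma ξ) M n - 1)

/-- The fattened hierarchical weighted word `ζ̃(L)` (with `M = 3(L+1)`). -/
noncomputable def tzeta (L : ℕ) : ℕ → ℕ := fun j =>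
  if zetaL L j = 0 then 0 else 3 * (3 * (L + 1)) ^ (zetaL L j - 1)

/-- `|A ∩ [0, n)|` for `A ⊆ ℕ`. -/
noncomputable def massCount (A : Set ℕ) (n : ℕ) : ℕ := Nat.card {a : ℕ | a ∈ A ∧ a < n}

/-!
A cluster of mass `m` contains a finite skeleton `S ⊆ Γ` with the same endpoints, built along the
merging that created it: the skeleton of a run is the union of the skeletons of its constituents.
With `q` the density of `Γ`, the expected number of skeletons of mass `m` in `Γ` with a given
start-point is at most the sum of `q ^ |S|` over them, and this sum is at most
`τ_k ^ m / M ^ (m + 1)` at level `k`: appending a constituent to a `(k+1)`-run leaves fewer than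
`M ^ (k + 1)` choices for its start-point, and this factor is paid for by the powers of `M`,
because the mass of the run falls short of the sum of the masses by `k`. Summing over the ways to
split off the last constituent gives `τ_0 = M ^ 2 * q` and `τ_{k+1} = τ_k * (1 + τ_k ^ k)`,
so that `τ_k ≤ 1 / 16` for all `k` when `τ_0 ≤ 1 / 64`.

Hence some cluster of mass `m` starts before `M ^ m` with probability at most `16 ^ (-m)`. By
Borel–Cantelli this happens for finitely many `m` only, and since `∑_{m ≥ 1} 16 ^ (-m) < 1`, with
positive probability it never happens. A cluster of level `ℓ` has mass at least `ℓ`, so the same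
event bounds the levels of the clusters containing a given point.
-/

/-! ### Weights of families of finite sets -/

section Weight

variable {α : Type*} {q b : ℝ≥0∞}

/-- The weight `∑ q ^ |S|` of a family of finite sets: a bound for the expected number of members
of the family all of whose elements belong to a random set of density `q`. -/
noncomputable def weight (q : ℝ≥0∞) (A : Set (Finset α)) : ℝ≥0∞ := ∑' S : A, q ^ S.1.card

theorem weight_mono {A B : Set (Finset α)} (h : A ⊆ B) : weight q A ≤ weight q B :=
  ENNReal.tsum_mono_subtype (fun S : Finset α => q ^ S.card) h

theorem weight_union_le (A B : Set (Finset α)) : weight q (A ∪ B) ≤ weight q A + weight q B :=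
  ENNReal.tsum_union_le (fun S : Finset α => q ^ S.card) A B

theorem weight_biUnion_finset_le {ι : Type*} (I : Finset ι) (A : ι → Set (Finset α)) :
    weight q (⋃ i ∈ I, A i) ≤ ∑ i ∈ I, weight q (A i) :=
  ENNReal.tsum_biUnion_le (fun S : Finset α => q ^ S.card) I A

theorem weight_singleton (S : Finset α) : weight q {S} = q ^ S.card :=
  tsum_singleton S fun T : Finset α => q ^ T.card

variable [DecidableEq α]

theorem weight_image_union_le {S : Finset α} {B : Set (Finset α)} (h : ∀ T ∈ B, Disjoint S T) :
    weight q ((S ∪ ·) '' B) ≤ q ^ S.card * weight q B := by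
  calc
    weight q ((S ∪ ·) '' B) ≤ ∑' T : B, q ^ (S ∪ T.1).card :=
      ENNReal.tsum_le_tsum_comp_of_surjective imageFactorization_surjective _
    _ = ∑' T : B, q ^ S.card * q ^ T.1.card :=
      tsum_congr fun T => by rw [Finset.card_union_of_disjoint (h T T.2), pow_add]
    _ = q ^ S.card * weight q B := ENNReal.tsum_mul_left

theorem weight_biUnion_image_union_le {A : Set (Finset α)} {B : Finset α → Set (Finset α)}
    (hdisj : ∀ S ∈ A, ∀ T ∈ B S, Disjoint S T) (hB : ∀ S ∈ A, weight q (B S) ≤ b) :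
    weight q (⋃ S ∈ A, (S ∪ ·) '' B S) ≤ weight q A * b := by
  calc
    weight q (⋃ S ∈ A, (S ∪ ·) '' B S) ≤ ∑' S : A, weight q ((S.1 ∪ ·) '' B S) :=
      ENNReal.tsum_biUnion_le_tsum (fun T : Finset α => q ^ T.card) A fun S => (S ∪ ·) '' B S
    _ ≤ ∑' S : A, q ^ S.1.card * b := ENNReal.tsum_le_tsum fun S =>
      (weight_image_union_le (hdisj S S.2)).trans (mul_le_mul_right (hB S S.2) _)
    _ = weight q A * b := ENNReal.tsum_mul_right

end Weight

theorem measure_exists_subset_le_weight {α Ω : Type*} [Countable α] [MeasurableSpace Ω]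
    {μ : Measure Ω} {q : ℝ≥0∞} {X : Ω → Set α}
    (hX : ∀ S : Finset α, μ {ω | ↑S ⊆ X ω} ≤ q ^ S.card) (A : Set (Finset α)) :
    μ {ω | ∃ S ∈ A, ↑S ⊆ X ω} ≤ weight q A := by
  have hunion : {ω | ∃ S ∈ A, ↑S ⊆ X ω} = ⋃ S ∈ A, {ω | ↑S ⊆ X ω} := by ext; simp
  rw [hunion]
  exact (measure_biUnion_le μ A.to_countable _).trans (ENNReal.tsum_le_tsum fun S => hX S)

/-! ### Skeletons and their weight -/

/-- The members of a family of finite sets of integers whose least element is `x`. -/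
def startingAt (A : Set (Finset ℕ)) (x : ℕ) : Set (Finset ℕ) := {S ∈ A | IsLeast (S : Set ℕ) x}

/-- The weight of the members of a family with a prescribed least element, in the worst case. -/
noncomputable def rootedWeight (q : ℝ≥0∞) (A : Set (Finset ℕ)) : ℝ≥0∞ :=
  ⨆ x, weight q (startingAt A x)

/-- The finite sets left behind by a finite `(k+1)`-run whose constituents have skeletons in `Q`:
`RunSkeleton M k Q m S` says that `S` is a union of skeletons, one for each constituent, that
consecutive ones are less than `M ^ (k + 1)` apart, and that the run creates a cluster of mass `m`.
A single heavy constituent counts as a run, and the masses are added as `m = m₁ + m₂ - k`, written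
without subtraction. -/
inductive RunSkeleton (M k : ℕ) (Q : ℕ → Set (Finset ℕ)) : ℕ → Finset ℕ → Prop
  | single {m : ℕ} {S : Finset ℕ} (hm : k + 1 ≤ m) (hS : S ∈ Q m) : RunSkeleton M k Q m S
  | join {m m₁ m₂ x y : ℕ} {S₁ S₂ : Finset ℕ} (hS₁ : RunSkeleton M k Q m₁ S₁)
      (hm₂ : k + 1 ≤ m₂) (hS₂ : S₂ ∈ Q m₂) (hy : IsGreatest (S₁ : Set ℕ) y)
      (hx : IsLeast (S₂ : Set ℕ) x) (hyx : y < x) (hxy : x < y + M ^ (k + 1))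
      (hm : m + k = m₁ + m₂) : RunSkeleton M k Q m (S₁ ∪ S₂)

/-- The skeletons of clusters of mass `m` in the partition `𝐂_k`: finite subsets of a cluster that
contain its two endpoints and witness all the merging that created it. -/
def skeletons (M : ℕ) : ℕ → ℕ → Set (Finset ℕ)
  | 0, m => {S | m = 1 ∧ ∃ x, S = {x}}
  | k + 1, m => skeletons M k m ∪ {S | RunSkeleton M k (skeletons M k) m S}

theorem skeletons_subset_succ (M k m : ℕ) : skeletons M k m ⊆ skeletons M (k + 1) m :=
  subset_union_left

theorem RunSkeleton.le_mass {M k m : ℕ} {Q : ℕ → Set (Finset ℕ)} {S : Finset ℕ}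
    (h : RunSkeleton M k Q m S) : k + 1 ≤ m := by
  induction h with
  | single hm _ => exact hm
  | join _ hm₂ _ _ _ _ _ hm ih => omega

theorem disjoint_of_isGreatest_of_isLeast {S T : Finset ℕ} {x y : ℕ}
    (hy : IsGreatest (S : Set ℕ) y) (hx : IsLeast (T : Set ℕ) x) (hyx : y < x) : Disjoint S T :=
  Finset.disjoint_left.2 fun _ hS hT => (hyx.trans_le (hx.2 hT)).not_ge (hy.2 hS)

theorem isLeast_of_isLeast_union {S T : Finset ℕ} {x y z : ℕ} (h : IsLeast (↑(S ∪ T) : Set ℕ) z)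
    (hy : IsGreatest (S : Set ℕ) y) (hx : IsLeast (T : Set ℕ) x) (hyx : y < x) :
    IsLeast (S : Set ℕ) z := by
  have hlower : ∀ a ∈ S, z ≤ a := fun a ha => h.2 (by simp [ha])
  refine ⟨?_, hlower⟩
  rcases Finset.mem_union.1 h.1 with hz | hz
  · exact hz
  · exact absurd (hlower y hy.1) (hyx.trans_le (hx.2 hz)).not_ge

section RootedWeight

variable {q τ : ℝ≥0∞} {M k : ℕ} {Q : ℕ → Set (Finset ℕ)}

theorem weight_startingAt_le (A : Set (Finset ℕ)) (x : ℕ) :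
    weight q (startingAt A x) ≤ rootedWeight q A :=
  le_iSup (fun x => weight q (startingAt A x)) x

theorem weight_biUnion_startingAt_le (I : Finset ℕ) (A : Set (Finset ℕ)) :
    weight q (⋃ x ∈ I, startingAt A x) ≤ I.card * rootedWeight q A :=
  calc
    weight q (⋃ x ∈ I, startingAt A x) ≤ ∑ x ∈ I, weight q (startingAt A x) :=
      weight_biUnion_finset_le I _
    _ ≤ ∑ _x ∈ I, rootedWeight q A := Finset.sum_le_sum fun x _ => weight_startingAt_le A x
    _ = I.card * rootedWeight q A := by rw [Finset.sum_const, nsmul_eq_mul]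

theorem rootedWeight_mono {A B : Set (Finset ℕ)} (h : A ⊆ B) :
    rootedWeight q A ≤ rootedWeight q B :=
  iSup_mono fun _ => weight_mono fun _ hS => ⟨h hS.1, hS.2⟩

/-- The members of `A` whose least element exceeds the largest element of `S` by less than `t`. -/
noncomputable def continuations (t : ℕ) (A : Set (Finset ℕ)) (S : Finset ℕ) : Set (Finset ℕ) :=
  ⋃ x ∈ Finset.Ioo (sSup (S : Set ℕ)) (sSup (S : Set ℕ) + t), startingAt A x

theorem weight_continuations_le (t : ℕ) (A : Set (Finset ℕ)) (S : Finset ℕ) :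
    weight q (continuations t A S) ≤ t * rootedWeight q A := by
  refine (weight_biUnion_startingAt_le _ A).trans (mul_le_mul_left ?_ _)
  rw [Nat.card_Ioo]
  exact_mod_cast (by omega : sSup (S : Set ℕ) + t - sSup (S : Set ℕ) - 1 ≤ t)

theorem disjoint_of_mem_continuations {t : ℕ} {A : Set (Finset ℕ)} {S T : Finset ℕ}
    (hT : T ∈ continuations t A S) : Disjoint S T := by
  rcases S.eq_empty_or_nonempty with rfl | hS
  · exact Finset.disjoint_empty_left T
  · simp only [continuations, mem_iUnion₂, Finset.mem_Ioo] at hT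
    obtain ⟨x, hx, -, hleast⟩ := hT
    have hmax : IsGreatest (S : Set ℕ) (sSup S) :=
      ⟨Nat.sSup_mem hS S.bddAbove, fun _ ha => le_csSup S.bddAbove ha⟩
    exact disjoint_of_isGreatest_of_isLeast hmax hleast hx.1

theorem startingAt_runSkeleton_subset (j x : ℕ) :
    startingAt {S | RunSkeleton M k Q (k + 1 + j) S} x ⊆
      startingAt (Q (k + 1 + j)) x ∪
        ⋃ i ∈ Finset.range j, ⋃ S ∈ startingAt {S | RunSkeleton M k Q (k + 1 + i) S} x,
          (S ∪ ·) '' continuations (M ^ (k + 1)) (Q (k + j - i)) S := by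
  rintro S ⟨hS, hleast⟩
  cases hS with
  | single _ hS => exact Or.inl ⟨hS, hleast⟩
  | @join _ m₁ m₂ x₂ y S₁ S₂ hS₁ hm₂ hS₂ hy hx hyx hxy hm =>
    obtain ⟨i, rfl⟩ := Nat.exists_eq_add_of_le hS₁.le_mass
    obtain rfl : m₂ = k + j - i := by omega
    refine Or.inr (mem_iUnion₂.2 ⟨i, Finset.mem_range.2 (by omega), mem_iUnion₂.2
      ⟨S₁, ⟨hS₁, isLeast_of_isLeast_union hleast hy hx hyx⟩, S₂, mem_iUnion₂.2 ?_, rfl⟩⟩)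
    exact ⟨x₂, by rw [hy.csSup_eq, Finset.mem_Ioo]; exact ⟨hyx, hxy⟩, hS₂, hx⟩

theorem rootedWeight_runSkeleton_le (j : ℕ) :
    rootedWeight q {S | RunSkeleton M k Q (k + 1 + j) S} ≤
      rootedWeight q (Q (k + 1 + j)) +
        ∑ i ∈ Finset.range j, rootedWeight q {S | RunSkeleton M k Q (k + 1 + i) S} *
          ((M : ℝ≥0∞) ^ (k + 1) * rootedWeight q (Q (k + j - i))) := by
  refine iSup_le fun x => (weight_mono (startingAt_runSkeleton_subset j x)).trans ?_
  refine (weight_union_le _ _).trans (add_le_add (weight_startingAt_le _ x) ?_)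
  refine (weight_biUnion_finset_le _ _).trans (Finset.sum_le_sum fun i _ => ?_)
  refine (weight_biUnion_image_union_le (fun _ _ _ => disjoint_of_mem_continuations)
    fun S _ => weight_continuations_le _ _ S).trans ?_
  rw [Nat.cast_pow]
  exact mul_le_mul_left (weight_startingAt_le _ x) _

theorem pow_mul_rootedWeight_runSkeleton_le
    (hQ : ∀ m, (M : ℝ≥0∞) ^ (m + 1) * rootedWeight q (Q m) ≤ τ ^ m) (j : ℕ) :
    (M : ℝ≥0∞) ^ (k + 1 + j + 1) * rootedWeight q {S | RunSkeleton M k Q (k + 1 + j) S} ≤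
      τ ^ (k + 1 + j) * (1 + τ ^ k) ^ j := by
  induction j using Nat.strong_induction_on with
  | h j ih =>
    set F : ℕ → ℝ≥0∞ := fun m => rootedWeight q {S | RunSkeleton M k Q m S}
    have hterm : ∀ i ∈ Finset.range j,
        (M : ℝ≥0∞) ^ (k + 1 + j + 1) *
            (F (k + 1 + i) * ((M : ℝ≥0∞) ^ (k + 1) * rootedWeight q (Q (k + j - i)))) ≤
          τ ^ (k + 1 + j) * ((1 + τ ^ k) ^ i * τ ^ k) := by
      intro i hi
      obtain ⟨d, rfl⟩ := Nat.exists_eq_add_of_lt (Finset.mem_range.1 hi)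
      have hd : k + (i + d + 1) - i = k + d + 1 := by omega
      rw [hd]
      calc
        _ = ((M : ℝ≥0∞) ^ (k + 1 + i + 1) * F (k + 1 + i)) *
              ((M : ℝ≥0∞) ^ (k + d + 1 + 1) * rootedWeight q (Q (k + d + 1))) := by ring
        _ ≤ (τ ^ (k + 1 + i) * (1 + τ ^ k) ^ i) * τ ^ (k + d + 1) :=
          mul_le_mul' (ih i (by omega)) (hQ _)
        _ = τ ^ (k + 1 + (i + d + 1)) * ((1 + τ ^ k) ^ i * τ ^ k) := by ring
    calc
      _ ≤ (M : ℝ≥0∞) ^ (k + 1 + j + 1) * rootedWeight q (Q (k + 1 + j)) +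
            ∑ i ∈ Finset.range j, (M : ℝ≥0∞) ^ (k + 1 + j + 1) *
              (F (k + 1 + i) * ((M : ℝ≥0∞) ^ (k + 1) * rootedWeight q (Q (k + j - i)))) := by
        rw [← Finset.mul_sum, ← mul_add]
        exact mul_le_mul_right (rootedWeight_runSkeleton_le j) _
      _ ≤ τ ^ (k + 1 + j) + ∑ i ∈ Finset.range j, τ ^ (k + 1 + j) * ((1 + τ ^ k) ^ i * τ ^ k) :=
        add_le_add (hQ _) (Finset.sum_le_sum hterm)
      _ = τ ^ (k + 1 + j) * ((∑ i ∈ Finset.range j, (τ ^ k + 1) ^ i) * τ ^ k + 1) := by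
        rw [← Finset.mul_sum, ← Finset.sum_mul, add_comm (τ ^ k)]
        ring
      _ = τ ^ (k + 1 + j) * (1 + τ ^ k) ^ j := by rw [geom_sum_mul_add, add_comm (τ ^ k)]

/-- The numbers `τ_k` with `τ_0 = τ` and `τ_{k+1} = τ_k * (1 + τ_k ^ k)`: for `τ = M ^ 2 * q`, the
rooted weight of the skeletons of mass `m` in `𝐂_k` is at most `τ_k ^ m / M ^ (m + 1)`. -/
noncomputable def activity (τ : ℝ≥0∞) : ℕ → ℝ≥0∞
  | 0 => τ
  | k + 1 => activity τ k * (1 + activity τ k ^ k)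

theorem rootedWeight_skeletons_zero_le (m : ℕ) :
    (M : ℝ≥0∞) ^ (m + 1) * rootedWeight q (skeletons M 0 m) ≤ ((M : ℝ≥0∞) ^ 2 * q) ^ m := by
  rw [rootedWeight, ENNReal.mul_iSup]
  refine iSup_le fun x => ?_
  by_cases hm : m = 1
  · have hsub : startingAt (skeletons M 0 m) x ⊆ {{x}} := by
      rintro S ⟨⟨-, y, rfl⟩, hleast⟩
      have hxy : x = y := by simpa using hleast.1
      rw [hxy, mem_singleton_iff]
    have hweight := weight_mono (q := q) hsub
    rw [weight_singleton, Finset.card_singleton, pow_one] at hweight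
    subst hm
    rw [pow_one]
    exact mul_le_mul_right hweight _
  · have hempty : startingAt (skeletons M 0 m) x = ∅ :=
      eq_empty_of_forall_notMem fun S hS => hm hS.1.1
    rw [hempty, weight, tsum_empty, mul_zero]
    exact zero_le

theorem pow_mul_rootedWeight_skeletons_le (k m : ℕ) :
    (M : ℝ≥0∞) ^ (m + 1) * rootedWeight q (skeletons M k m) ≤
      activity ((M : ℝ≥0∞) ^ 2 * q) k ^ m := by
  induction k generalizing m with
  | zero => exact rootedWeight_skeletons_zero_le m
  | succ k ih =>
    rw [activity]
    set τ := activity ((M : ℝ≥0∞) ^ 2 * q) k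
    have hone : 1 ≤ 1 + τ ^ k := le_self_add
    rcases lt_or_ge k m with hkm | hmk
    · obtain ⟨j, rfl⟩ := Nat.exists_eq_add_of_le hkm
      have hsub : skeletons M (k + 1) (k + 1 + j) ⊆
          {S | RunSkeleton M k (skeletons M k) (k + 1 + j) S} :=
        union_subset (fun _ hS => .single hkm hS) Subset.rfl
      calc
        _ ≤ (M : ℝ≥0∞) ^ (k + 1 + j + 1) *
              rootedWeight q {S | RunSkeleton M k (skeletons M k) (k + 1 + j) S} :=
          mul_le_mul_right (rootedWeight_mono hsub) _
        _ ≤ τ ^ (k + 1 + j) * (1 + τ ^ k) ^ j := pow_mul_rootedWeight_runSkeleton_le ih j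
        _ ≤ τ ^ (k + 1 + j) * (1 + τ ^ k) ^ (k + 1 + j) :=
          mul_le_mul_right (pow_le_pow_right₀ hone (Nat.le_add_left j _)) _
        _ = (τ * (1 + τ ^ k)) ^ (k + 1 + j) := (mul_pow _ _ _).symm
    · have hsub : skeletons M (k + 1) m ⊆ skeletons M k m :=
        union_subset Subset.rfl fun _ hS => absurd (RunSkeleton.le_mass hS) (by omega)
      exact (mul_le_mul_right (rootedWeight_mono hsub) _).trans <|
        (ih m).trans (pow_le_pow_left' (le_mul_of_one_le_right' hone) m)

/-- The bound `τ_{k+1} ≤ (1 - 2 ^ (-(k + 1))) / 16`, strong enough for induction, with the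
subtraction moved to the other side. -/
theorem activity_succ_add_le (hτ : τ ≤ 64⁻¹) (k : ℕ) :
    activity τ (k + 1) + 16⁻¹ * 2⁻¹ ^ (k + 1) ≤ 16⁻¹ := by
  induction k with
  | zero =>
    have h64 : (64⁻¹ : ℝ≥0∞) = 16⁻¹ * (2⁻¹ * 2⁻¹) := by
      rw [← ENNReal.mul_inv (by simp) (by simp), ← ENNReal.mul_inv (by simp) (by simp)]
      norm_num
    calc
      activity τ (0 + 1) + 16⁻¹ * 2⁻¹ ^ (0 + 1) = τ * 2 + 16⁻¹ * 2⁻¹ := by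
        simp only [activity, zero_add, pow_zero, pow_one, one_add_one_eq_two]
      _ ≤ 64⁻¹ * 2 + 16⁻¹ * 2⁻¹ := by gcongr
      _ = 16⁻¹ * (2⁻¹ * (2⁻¹ + 2⁻¹) + 2⁻¹) := by rw [h64]; ring
      _ = 16⁻¹ := by rw [ENNReal.inv_two_add_inv_two, mul_one, ENNReal.inv_two_add_inv_two, mul_one]
  | succ k ih =>
    set a := activity τ (k + 1) with ha
    have hle : a ≤ 16⁻¹ := le_self_add.trans ih
    have h16 : (16⁻¹ : ℝ≥0∞) ≤ 2⁻¹ ^ 2 := by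
      rw [← ENNReal.inv_pow]
      exact ENNReal.inv_le_inv.2 (by norm_num)
    have htwo : (2⁻¹ : ℝ≥0∞) ≤ 1 := ENNReal.inv_le_one.2 one_le_two
    have hpow : a ^ (k + 2) ≤ 16⁻¹ * 2⁻¹ ^ (k + 2) :=
      calc
        a ^ (k + 2) = a * a ^ (k + 1) := pow_succ' a (k + 1)
        _ ≤ 16⁻¹ * (2⁻¹ ^ 2) ^ (k + 1) := mul_le_mul' hle (pow_le_pow_left' (hle.trans h16) _)
        _ = 16⁻¹ * 2⁻¹ ^ (2 * (k + 1)) := by rw [pow_mul]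
        _ ≤ 16⁻¹ * 2⁻¹ ^ (k + 2) :=
          mul_le_mul_right (pow_le_pow_right_of_le_one' htwo (by omega)) _
    calc
      activity τ (k + 1 + 1) + 16⁻¹ * 2⁻¹ ^ (k + 1 + 1)
          = a + a ^ (k + 2) + 16⁻¹ * 2⁻¹ ^ (k + 2) := by rw [activity, ← ha]; ring
      _ ≤ a + 16⁻¹ * 2⁻¹ ^ (k + 2) + 16⁻¹ * 2⁻¹ ^ (k + 2) := by gcongr
      _ = a + 16⁻¹ * (2⁻¹ ^ (k + 1) * (2⁻¹ + 2⁻¹)) := by ring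
      _ ≤ 16⁻¹ := by rwa [ENNReal.inv_two_add_inv_two, mul_one]

theorem activity_le (hτ : τ ≤ 64⁻¹) : ∀ k, activity τ k ≤ 16⁻¹
  | 0 => hτ.trans (ENNReal.inv_le_inv.2 (by norm_num))
  | k + 1 => le_self_add.trans (activity_succ_add_le hτ k)

end RootedWeight
/-! ### Separated clusters and their runs -/

section Runs

variable {B R R' : Set Clu} {C D U W : Set ℕ} {p q r : Clu} {t : ℕ}

theorem cluLT.mono (h : cluLT U W) (hC : C ⊆ U) (hD : D ⊆ W) : cluLT C D :=
  fun a ha b hb => h a (hC ha) b (hD hb)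

theorem cluLT.sInf_lt_sInf (h : cluLT C D) (hC : C.Nonempty) (hD : D.Nonempty) :
    sInf C < sInf D :=
  h _ (Nat.sInf_mem hC) _ (Nat.sInf_mem hD)

theorem subset_spanI (hU : U.Finite) : U ⊆ spanI U :=
  fun _ ha => ⟨Nat.sInf_le ha, le_csSup hU.bddAbove ha⟩

theorem cluLT.spanI_spanI (h : cluLT U W) (hU : U.Finite) (hU' : U.Nonempty) (hW : W.Nonempty) :
    cluLT (spanI U) (spanI W) :=
  fun _ ha _ hb => (ha.2.trans_lt (h _ (hU'.csSup_mem hU) _ (Nat.sInf_mem hW))).trans_le hb.1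

theorem cluLT.right_spanI_of_disjoint (h : cluLT D C) (hC : C.Nonempty) (hCU : C ⊆ U)
    (hU : U.Finite) (hdisj : Disjoint D (spanI U)) : cluLT D (spanI U) := by
  intro a ha b hb
  obtain ⟨c, hc⟩ := hC
  by_contra! hba
  exact hdisj.notMem_of_mem_left ha
    ⟨hb.1.trans hba, (h a ha c hc).le.trans (subset_spanI hU (hCU hc)).2⟩

theorem cluLT.left_spanI_of_disjoint (h : cluLT C D) (hC : C.Nonempty) (hCU : C ⊆ U)
    (hU : U.Finite) (hdisj : Disjoint D (spanI U)) : cluLT (spanI U) D := by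
  intro b hb a ha
  obtain ⟨c, hc⟩ := hC
  by_contra! hab
  exact hdisj.notMem_of_mem_left ha
    ⟨(subset_spanI hU (hCU hc)).1.trans (h c hc a ha).le, hab.trans hb.2⟩

theorem cluDist_comm (C D : Set ℕ) : cluDist C D = cluDist D C := by
  refine congrArg sInf (ext fun d => ⟨?_, ?_⟩) <;>
  · rintro ⟨a, ha, b, hb, rfl⟩
    exact ⟨b, hb, a, ha, Nat.dist_comm a b⟩

theorem sInf_lt_sSup_add_of_cluDist_lt (hC : C.Finite) (hC' : C.Nonempty) (hD : D.Nonempty)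
    (h : cluDist C D < t) : sInf D < sSup C + t := by
  have hne : {d | ∃ a ∈ C, ∃ b ∈ D, d = Nat.dist a b}.Nonempty :=
    let ⟨a, ha⟩ := hC'; let ⟨b, hb⟩ := hD; ⟨_, a, ha, b, hb, rfl⟩
  obtain ⟨a, ha, b, hb, hab⟩ := Nat.sInf_mem hne
  have haC : a ≤ sSup C := le_csSup hC.bddAbove ha
  have hbD : sInf D ≤ b := Nat.sInf_le hb
  have hba : b ≤ a + Nat.dist a b := by rw [Nat.dist]; omega
  rw [cluDist, hab] at h
  omega

/-- A collection of nonempty finite clusters any two of which lie one to the left of the other. -/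
structure IsSeparated (B : Set Clu) : Prop where
  nonempty : ∀ q ∈ B, q.1.Nonempty
  finite : ∀ q ∈ B, q.1.Finite
  pairwise : B.Pairwise fun p q => cluLT p.1 q.1 ∨ cluLT q.1 p.1

namespace IsSeparated

theorem mono (hB : IsSeparated B) (h : R ⊆ B) : IsSeparated R :=
  ⟨fun q hq => hB.nonempty q (h hq), fun q hq => hB.finite q (h hq), hB.pairwise.mono h⟩

theorem sInf_lt_sInf_of_cluLT (hB : IsSeparated B) (hp : p ∈ B) (hq : q ∈ B)
    (h : cluLT p.1 q.1) : sInf p.1 < sInf q.1 :=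
  h.sInf_lt_sInf (hB.nonempty p hp) (hB.nonempty q hq)

theorem cluLT_iff (hB : IsSeparated B) (hp : p ∈ B) (hq : q ∈ B) :
    cluLT p.1 q.1 ↔ sInf p.1 < sInf q.1 := by
  refine ⟨hB.sInf_lt_sInf_of_cluLT hp hq, fun h => ?_⟩
  have hne : p ≠ q := by rintro rfl; exact h.false
  exact (hB.pairwise hp hq hne).resolve_right fun h' =>
    (hB.sInf_lt_sInf_of_cluLT hq hp h').not_gt h

theorem injOn_sInf (hB : IsSeparated B) : InjOn (fun q : Clu => sInf q.1) B := by
  intro p hp q hq h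
  by_contra hne
  rcases hB.pairwise hp hq hne with h' | h'
  · exact (hB.sInf_lt_sInf_of_cluLT hp hq h').ne h
  · exact (hB.sInf_lt_sInf_of_cluLT hq hp h').ne' h

theorem biUnion_cluLT (hB : IsSeparated B) (hR : R ⊆ B) (hq : q ∈ B)
    (hlt : ∀ p ∈ R, sInf p.1 < sInf q.1) : cluLT (⋃ p ∈ R, p.1) q.1 := fun a ha =>
  let ⟨p, hp, hap⟩ := mem_iUnion₂.1 ha
  (hB.cluLT_iff (hR hp) hq).2 (hlt p hp) a hap

end IsSeparated

theorem adjStep.symm (h : adjStep B t p q) : adjStep B t q p :=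
  ⟨h.2.1, h.1, cluDist_comm p.1 q.1 ▸ h.2.2.1, h.2.2.2.symm⟩

theorem adjStep.not_between (h : adjStep B t p q) (hB : IsSeparated B) (hr : r ∈ B) :
    ¬(sInf p.1 < sInf r.1 ∧ sInf r.1 < sInf q.1) := by
  obtain ⟨hp, hq, -, ⟨-, hadj⟩ | ⟨hlt, -⟩⟩ := h
  · rw [← hB.cluLT_iff hp hr, ← hB.cluLT_iff hr hq]
    exact hadj r hr
  · exact fun h => (hB.sInf_lt_sInf_of_cluLT hq hp hlt).not_gt (h.1.trans h.2)

theorem adjStep.sInf_lt_iff (h : adjStep B t p q) (hB : IsSeparated B) (hr : r ∈ B) (hrp : r ≠ p)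
    (hrq : r ≠ q) : sInf r.1 < sInf p.1 ↔ sInf r.1 < sInf q.1 := by
  have hp := (hB.injOn_sInf.ne_iff hr h.1).2 hrp
  have hq := (hB.injOn_sInf.ne_iff hr h.2.1).2 hrq
  have hpq := h.not_between hB hr
  have hqp := h.symm.not_between hB hr
  omega

theorem exists_near_left_of_reflTransGen (hB : IsSeparated B)
    (h : Relation.ReflTransGen (adjStep B t) p q) (hlt : sInf p.1 < sInf q.1) :
    ∃ b ∈ B, Relation.ReflTransGen (adjStep B t) p b ∧ sInf b.1 < sInf q.1 ∧
      sInf q.1 < sSup b.1 + t := by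
  induction h using Relation.ReflTransGen.head_induction_on with
  | refl => exact absurd hlt (lt_irrefl _)
  | @head p c hpc hcq ih =>
    have hp : p ∈ B := hpc.1
    by_cases hc : c = q
    · subst hc
      exact ⟨p, hp, .refl, hlt, sInf_lt_sSup_add_of_cluDist_lt (hB.finite p hp)
        (hB.nonempty p hp) (hB.nonempty c hpc.2.1) hpc.2.2.1⟩
    · have hq : q ∈ B := by
        obtain h | ⟨d, -, hdq⟩ := Relation.ReflTransGen.cases_tail hcq
        · exact absurd h.symm hc
        · exact hdq.2.1
      have hne : sInf c.1 ≠ sInf q.1 := (hB.injOn_sInf.ne_iff hpc.2.1 hq).2 hc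
      have hnot := hpc.not_between hB hq
      obtain ⟨b, hb, hcb, hbq⟩ := ih (by omega)
      exact ⟨b, hb, .head hpc hcb, hbq⟩

namespace IsRun

theorem subset (hR : IsRun B t R) : R ⊆ B := by
  obtain ⟨p, -, rfl, -⟩ := hR
  exact sep_subset _ _

theorem nonempty (hR : IsRun B t R) : R.Nonempty :=
  let ⟨_, _, _, q, hq, _⟩ := hR
  ⟨q, hq⟩

theorem reflTransGen (hR : IsRun B t R) (hp : p ∈ R) (hq : q ∈ R) :
    Relation.ReflTransGen (adjStep B t) p q := by
  obtain ⟨b, -, rfl, -⟩ := hR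
  have : Std.Symm (adjStep B t) := ⟨fun _ _ => adjStep.symm⟩
  exact (Std.Symm.symm _ _ hp.2).trans hq.2

theorem mem_of_reflTransGen (hR : IsRun B t R) (hp : p ∈ R) (hq : q ∈ B)
    (h : Relation.ReflTransGen (adjStep B t) p q) : q ∈ R := by
  obtain ⟨b, -, rfl, -⟩ := hR
  exact ⟨hq, hp.2.trans h⟩

theorem eq_of_mem (hR : IsRun B t R) (hR' : IsRun B t R') (hp : p ∈ R) (hp' : p ∈ R') : R = R' :=
  Subset.antisymm
    (fun _ hq => hR'.mem_of_reflTransGen hp' (hR.subset hq) (hR.reflTransGen hp hq))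
    (fun _ hq => hR.mem_of_reflTransGen hp (hR'.subset hq) (hR'.reflTransGen hp' hq))

theorem exists_near_left (hR : IsRun B t R) (hB : IsSeparated B) (hp : p ∈ R) (hq : q ∈ R)
    (hlt : sInf p.1 < sInf q.1) : ∃ b ∈ R, sInf b.1 < sInf q.1 ∧ sInf q.1 < sSup b.1 + t := by
  obtain ⟨b, hb, hpb, hbq⟩ := exists_near_left_of_reflTransGen hB (hR.reflTransGen hp hq) hlt
  exact ⟨b, hR.mem_of_reflTransGen hp hb hpb, hbq⟩

theorem sInf_lt_iff (hR : IsRun B t R) (hB : IsSeparated B) (hr : r ∈ B) (hrR : r ∉ R)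
    (hp : p ∈ R) (hq : q ∈ R) : sInf r.1 < sInf p.1 ↔ sInf r.1 < sInf q.1 := by
  have hpath := hR.reflTransGen hp hq
  clear hq
  induction hpath with
  | refl => rfl
  | @tail c d hpc hcd ih =>
    have hc : c ∈ R := hR.mem_of_reflTransGen hp hcd.1 hpc
    have hd : d ∈ R := hR.mem_of_reflTransGen hc hcd.2.1 (.single hcd)
    exact ih.trans (hcd.sInf_lt_iff hB hr (ne_of_mem_of_not_mem hc hrR).symm
      (ne_of_mem_of_not_mem hd hrR).symm)

theorem cluLT_biUnion (hR : IsRun B t R) (hR' : IsRun B t R') (hB : IsSeparated B) (hne : R ≠ R')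
    (hp : p ∈ R) (hq : q ∈ R') (hpq : cluLT p.1 q.1) :
    cluLT (⋃ r ∈ R, r.1) (⋃ s ∈ R', s.1) := by
  intro a ha b hb
  obtain ⟨r, hr, ha⟩ := mem_iUnion₂.1 ha
  obtain ⟨s, hs, hb⟩ := mem_iUnion₂.1 hb
  refine (hB.cluLT_iff (hR.subset hr) (hR'.subset hs)).2 ?_ a ha b hb
  have hpR' : p ∉ R' := fun h => hne (hR.eq_of_mem hR' hp h)
  have hsR : s ∉ R := fun h => hne (hR.eq_of_mem hR' h hs)
  have hps : sInf p.1 < sInf s.1 := (hR'.sInf_lt_iff hB (hR.subset hp) hpR' hq hs).1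
    (hB.sInf_lt_sInf_of_cluLT (hR.subset hp) (hR'.subset hq) hpq)
  have hrs : sInf r.1 ≠ sInf s.1 := (hB.injOn_sInf.ne_iff (hR.subset hr) (hR'.subset hs)).2
    (ne_of_mem_of_not_mem hr hsR)
  have hsr := hR.sInf_lt_iff hB (hR'.subset hs) hsR hp hr
  omega

end IsRun

end Runs
/-! ### Clusters have skeletons -/

section Frames

variable {Γ : Set ℕ} {S T : Finset ℕ} {U W : Set ℕ}

theorem csSup_spanI_inter (hU : U.Finite) (hU' : U.Nonempty) (hUΓ : U ⊆ Γ) :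
    sSup (spanI U ∩ Γ) = sSup U :=
  IsGreatest.csSup_eq ⟨⟨subset_spanI hU (hU'.csSup_mem hU), hUΓ (hU'.csSup_mem hU)⟩,
    fun _ ha => ha.1.2⟩

theorem csInf_spanI_inter (hU : U.Finite) (hU' : U.Nonempty) (hUΓ : U ⊆ Γ) :
    sInf (spanI U ∩ Γ) = sInf U :=
  IsLeast.csInf_eq ⟨⟨subset_spanI hU (Nat.sInf_mem hU'), hUΓ (Nat.sInf_mem hU')⟩,
    fun _ ha => ha.1.1⟩

/-- `S` is a subset of `U` containing both endpoints of `U`. -/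
structure IsFrame (S : Finset ℕ) (U : Set ℕ) : Prop where
  subset : ↑S ⊆ U
  sInf_mem : sInf U ∈ S
  sSup_mem : sSup U ∈ S

namespace IsFrame

theorem isLeast (h : IsFrame S U) : IsLeast (S : Set ℕ) (sInf U) :=
  ⟨h.sInf_mem, fun _ ha => Nat.sInf_le (h.subset ha)⟩

theorem isGreatest (h : IsFrame S U) (hU : U.Finite) : IsGreatest (S : Set ℕ) (sSup U) :=
  ⟨h.sSup_mem, fun _ ha => le_csSup hU.bddAbove (h.subset ha)⟩

theorem nonempty (h : IsFrame S U) : U.Nonempty := ⟨_, h.subset h.sInf_mem⟩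

theorem union (hS : IsFrame S U) (hT : IsFrame T W) (hU : U.Finite) (hW : W.Finite)
    (hUW : cluLT U W) : IsFrame (S ∪ T) (U ∪ W) := by
  have hinf : sInf (U ∪ W) = sInf U := by
    rw [csInf_union (OrderBot.bddBelow U) hS.nonempty (OrderBot.bddBelow W) hT.nonempty]
    exact min_eq_left (hUW.sInf_lt_sInf hS.nonempty hT.nonempty).le
  have hsup : sSup (U ∪ W) = sSup W := by
    rw [csSup_union hU.bddAbove hS.nonempty hW.bddAbove hT.nonempty]
    exact max_eq_right
      (hUW _ (hS.nonempty.csSup_mem hU) _ (hT.nonempty.csSup_mem hW)).le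
  refine ⟨?_, ?_, ?_⟩
  · rw [Finset.coe_union]
    exact union_subset_union hS.subset hT.subset
  · rw [hinf]
    exact Finset.mem_union_left T hS.sInf_mem
  · rw [hsup]
    exact Finset.mem_union_right S hT.sSup_mem

theorem spanI_inter (h : IsFrame S U) (hU : U.Finite) (hUΓ : U ⊆ Γ) : IsFrame S (spanI U ∩ Γ) where
  subset := h.subset.trans (subset_inter (subset_spanI hU) hUΓ)
  sInf_mem := by rw [csInf_spanI_inter hU h.nonempty hUΓ]; exact h.sInf_mem
  sSup_mem := by rw [csSup_spanI_inter hU h.nonempty hUΓ]; exact h.sSup_mem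

end IsFrame

end Frames

section RunSkeletons

variable {M k : ℕ} {Q : ℕ → Set (Finset ℕ)}

theorem exists_runSkeleton_union {m₁ : ℕ} {S₁ : Finset ℕ} {U : Set ℕ} {c : Clu}
    (hS₁ : RunSkeleton M k Q m₁ S₁) (hU : U.Finite) (hframe : IsFrame S₁ U) (hc : c.1.Finite)
    (hmass : k + 1 ≤ c.2) (hskel : ∃ S ∈ Q c.2, IsFrame S c.1) (hUc : cluLT U c.1)
    (hgap : sInf c.1 < sSup U + M ^ (k + 1)) :
    ∃ m S, RunSkeleton M k Q m S ∧ IsFrame S (U ∪ c.1) ∧ m + k = m₁ + c.2 := by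
  obtain ⟨S₂, hS₂, hframe₂⟩ := hskel
  have hlt : sSup U < sInf c.1 :=
    hUc _ (hframe.nonempty.csSup_mem hU) _ (Nat.sInf_mem hframe₂.nonempty)
  have hm : m₁ + c.2 - k + k = m₁ + c.2 := by omega
  exact ⟨m₁ + c.2 - k, S₁ ∪ S₂,
    .join hS₁ hmass hS₂ (hframe.isGreatest hU) hframe₂.isLeast hlt hgap hm,
    hframe.union hframe₂ hU hc hUc, hm⟩

theorem exists_runSkeleton {F : Finset Clu} (hF : F.Nonempty)
    (hsep : IsSeparated (F : Set Clu)) (hmass : ∀ q ∈ F, k + 1 ≤ q.2)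
    (hskel : ∀ q ∈ F, ∃ S ∈ Q q.2, IsFrame S q.1)
    (hlink : ∀ p ∈ F, ∀ q ∈ F, sInf p.1 < sInf q.1 →
      ∃ b ∈ F, sInf b.1 < sInf q.1 ∧ sInf q.1 < sSup b.1 + M ^ (k + 1)) :
    ∃ m S, RunSkeleton M k Q m S ∧ IsFrame S (⋃ q ∈ F, q.1) ∧
      m + k * F.card = ∑ q ∈ F, q.2 + k := by
  induction F using Finset.induction_on_max_value (fun q : Clu => sInf q.1) with
  | empty => exact absurd hF Finset.not_nonempty_empty
  | insert a F ha hmax ih =>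
    have haF : a ∈ insert a F := Finset.mem_insert_self a F
    have hFa : F ⊆ insert a F := Finset.subset_insert a F
    have hlt : ∀ q ∈ F, sInf q.1 < sInf a.1 := fun q hq =>
      lt_of_le_of_ne (hmax q hq) ((hsep.injOn_sInf.ne_iff (hFa hq) haF).2
        (ne_of_mem_of_not_mem hq ha))
    have hmem : ∀ b ∈ insert a F, sInf b.1 < sInf a.1 → b ∈ F := fun b hb hba =>
      Finset.mem_of_mem_insert_of_ne hb (by rintro rfl; exact hba.false)
    rcases F.eq_empty_or_nonempty with rfl | ⟨p, hp⟩
    · obtain ⟨S, hS, hframe⟩ := hskel a haF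
      exact ⟨a.2, S, .single (hmass a haF) hS, by simpa using hframe, by simp⟩
    obtain ⟨m₁, S₁, hS₁, hframe₁, hm₁⟩ := ih ⟨p, hp⟩ (hsep.mono (Finset.coe_subset.2 hFa))
      (fun q hq => hmass q (hFa hq)) (fun q hq => hskel q (hFa hq)) fun p hp q hq hpq =>
        let ⟨b, hb, hbq, hgap⟩ := hlink p (hFa hp) q (hFa hq) hpq
        ⟨b, hmem b hb (hbq.trans (hlt q hq)), hbq, hgap⟩
    have hfin : (⋃ q ∈ F, q.1).Finite :=
      F.finite_toSet.biUnion fun q hq => hsep.finite q (hFa hq)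
    have hUa : cluLT (⋃ q ∈ F, q.1) a.1 := hsep.biUnion_cluLT (Finset.coe_subset.2 hFa) haF hlt
    have hgap : sInf a.1 < sSup (⋃ q ∈ F, q.1) + M ^ (k + 1) := by
      obtain ⟨b, hb, hba, hgap⟩ := hlink p (hFa hp) a haF (hlt p hp)
      have hbU : b.1 ⊆ ⋃ q ∈ F, q.1 :=
        subset_biUnion_of_mem (u := fun q : Clu => q.1) (hmem b hb hba)
      exact hgap.trans_le
        (Nat.add_le_add_right (csSup_le_csSup hfin.bddAbove (hsep.nonempty b hb) hbU) _)
    obtain ⟨m, S, hS, hframe, hm⟩ := exists_runSkeleton_union hS₁ hfin hframe₁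
      (hsep.finite a haF) (hmass a haF) (hskel a haF) hUa hgap
    refine ⟨m, S, hS, ?_, ?_⟩
    · rwa [Finset.set_biUnion_insert, union_comm]
    · rw [Finset.card_insert_of_notMem ha, Finset.sum_insert ha, mul_add, mul_one]
      omega

end RunSkeletons

section Regular

variable {Γ : Set ℕ} {M k : ℕ} {R R' : Set Clu} {c : Clu}

/-- The clusters `𝐂_{k,k+1}` of mass at least `k + 1` in `𝐂_k`. -/
def heavy (Γ : Set ℕ) (M k : ℕ) : Set Clu := {q ∈ parts Γ M k | k + 1 ≤ q.2}

/-- The genuine clusters of `𝐂_k`. By the conventions for `sSup` and `∑ᶠ`, an infinite run would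
add the empty cluster of mass zero to the partition; this artefact is discarded. -/
def clusters (Γ : Set ℕ) (M k : ℕ) : Set Clu := parts Γ M k \ {(∅, 0)}

/-- The invariant of the grouping construction: the clusters of `𝐂_k` are separated subsets of `Γ`,
each of which has a skeleton. -/
structure IsRegular (Γ : Set ℕ) (M k : ℕ) : Prop where
  isSeparated : IsSeparated (clusters Γ M k)
  subset : ∀ c ∈ clusters Γ M k, c.1 ⊆ Γ
  exists_skeleton : ∀ c ∈ clusters Γ M k, ∃ S ∈ skeletons M k c.2, IsFrame S c.1

theorem mem_clusters_of_mass_pos (hc : c ∈ parts Γ M k) (hm : 0 < c.2) : c ∈ clusters Γ M k :=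
  ⟨hc, by rintro rfl; exact hm.false⟩

theorem heavy_subset_clusters : heavy Γ M k ⊆ clusters Γ M k :=
  fun _ hq => mem_clusters_of_mass_pos hq.1 (Nat.zero_lt_of_lt hq.2)

theorem IsSeparated.finite_of_finite_biUnion (hR : IsSeparated R) (h : (⋃ q ∈ R, q.1).Finite) :
    R.Finite :=
  Finite.of_injOn (f := fun q : Clu => sInf q.1) (t := ⋃ q ∈ R, q.1)
    (fun q hq => mem_iUnion₂.2 ⟨q, hq, Nat.sInf_mem (hR.nonempty q hq)⟩) hR.injOn_sInf h

theorem runClu_eq_of_infinite (hΓ : 0 ∉ Γ) (hR : IsSeparated R) (hmass : ∀ q ∈ R, q.2 ≠ 0)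
    (hinf : R.Infinite) : runClu Γ k R = (∅, 0) := by
  have hunbdd : ¬BddAbove (⋃ q ∈ R, q.1) := fun h =>
    hinf (hR.finite_of_finite_biUnion (finite_iff_bddAbove.2 h))
  have hset : spanI (⋃ q ∈ R, q.1) ∩ Γ = ∅ := by
    refine eq_empty_of_forall_notMem fun a ha => hΓ ?_
    have ha0 : a = 0 := by simpa [csSup_of_not_bddAbove hunbdd] using ha.1.2
    exact ha0 ▸ ha.2
  have hsum : ∑ᶠ q ∈ R, q.2 = 0 := by
    refine finsum_mem_eq_zero_of_infinite ?_
    have hsupp : R ∩ Function.support Prod.snd = R := inter_eq_left.2 hmass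
    rwa [hsupp]
  rw [runClu, hset, hsum, Nat.zero_sub]

namespace IsRegular

theorem isSeparated_heavy (h : IsRegular Γ M k) : IsSeparated (heavy Γ M k) :=
  h.isSeparated.mono heavy_subset_clusters

theorem finite_biUnion (h : IsRegular Γ M k) (hR : R ⊆ heavy Γ M k) (hfin : R.Finite) :
    (⋃ q ∈ R, q.1).Finite :=
  hfin.biUnion fun q hq => h.isSeparated_heavy.finite q (hR hq)

theorem nonempty_biUnion (h : IsRegular Γ M k) (hR : IsRun (heavy Γ M k) (M ^ (k + 1)) R) :
    (⋃ q ∈ R, q.1).Nonempty :=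
  let ⟨q, hq⟩ := hR.nonempty
  (h.isSeparated_heavy.nonempty q (hR.subset hq)).mono
    (subset_biUnion_of_mem (u := fun q : Clu => q.1) hq)

theorem biUnion_subset (h : IsRegular Γ M k) (hR : R ⊆ heavy Γ M k) : ⋃ q ∈ R, q.1 ⊆ Γ :=
  iUnion₂_subset fun q hq => h.subset q (heavy_subset_clusters (hR hq))

theorem exists_runSkeleton_runClu (h : IsRegular Γ M k)
    (hR : IsRun (heavy Γ M k) (M ^ (k + 1)) R) (hfin : R.Finite) :
    ∃ S, RunSkeleton M k (skeletons M k) (runClu Γ k R).2 S ∧ IsFrame S (runClu Γ k R).1 := by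
  lift R to Finset Clu using hfin
  obtain ⟨m, S, hS, hframe, hm⟩ := exists_runSkeleton (Q := skeletons M k)
    (Finset.coe_nonempty.1 hR.nonempty) (h.isSeparated_heavy.mono hR.subset)
    (fun q hq => (hR.subset hq).2)
    (fun q hq => h.exists_skeleton q (heavy_subset_clusters (hR.subset hq)))
    (fun p hp q hq => hR.exists_near_left h.isSeparated_heavy hp hq)
  have hmass : (runClu Γ k R).2 = m := by
    obtain ⟨n, hn⟩ := Nat.exists_eq_succ_of_ne_zero
      (Finset.card_ne_zero.2 (Finset.coe_nonempty.1 hR.nonempty))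
    simp only [runClu, finsum_mem_coe_finset, Nat.card_coe_set_eq, ncard_coe_finset]
    rw [hn, Nat.succ_eq_add_one, mul_add] at hm
    rw [hn, Nat.succ_sub_one]
    omega
  exact ⟨S, hmass ▸ hS,
    hframe.spanI_inter (h.finite_biUnion hR.subset R.finite_toSet) (h.biUnion_subset hR.subset)⟩

theorem mem_clusters_succ (h : IsRegular Γ M k) (hΓ : 0 ∉ Γ) (hc : c ∈ clusters Γ M (k + 1)) :
    (∃ R, IsRun (heavy Γ M k) (M ^ (k + 1)) R ∧ R.Finite ∧ c = runClu Γ k R) ∨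
      (c ∈ clusters Γ M k ∧ ∀ R, IsRun (heavy Γ M k) (M ^ (k + 1)) R →
        Disjoint c.1 (spanI (⋃ q ∈ R, q.1))) := by
  obtain ⟨⟨R, hR, rfl⟩ | ⟨hc, hdisj⟩, hne⟩ := hc
  · refine Or.inl ⟨R, hR, ?_, rfl⟩
    by_contra hinf
    exact hne (runClu_eq_of_infinite hΓ (h.isSeparated_heavy.mono hR.subset)
      (fun q hq => (Nat.zero_lt_of_lt (hR.subset hq).2).ne') hinf)
  · exact Or.inr ⟨⟨hc, hne⟩, hdisj⟩

theorem cluLT_or_cluLT_runClu (h : IsRegular Γ M k) (hc : c ∈ clusters Γ M k)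
    (hR : IsRun (heavy Γ M k) (M ^ (k + 1)) R) (hfin : R.Finite)
    (hdisj : Disjoint c.1 (spanI (⋃ q ∈ R, q.1))) :
    cluLT c.1 (runClu Γ k R).1 ∨ cluLT (runClu Γ k R).1 c.1 := by
  obtain ⟨q, hq⟩ := hR.nonempty
  have hqc : q ∈ clusters Γ M k := heavy_subset_clusters (hR.subset hq)
  have hU := h.finite_biUnion hR.subset hfin
  have hqU : q.1 ⊆ ⋃ q ∈ R, q.1 := subset_biUnion_of_mem (u := fun q : Clu => q.1) hq
  have hqne : q.1.Nonempty := h.isSeparated.nonempty q hqc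
  have hne : c ≠ q := by
    rintro rfl
    obtain ⟨a, ha⟩ := hqne
    exact hdisj.notMem_of_mem_left ha (subset_spanI hU (hqU ha))
  exact (h.isSeparated.pairwise hc hqc hne).imp
    (fun hcq => (hcq.right_spanI_of_disjoint hqne hqU hU hdisj).mono Subset.rfl inter_subset_left)
    (fun hqc => (hqc.left_spanI_of_disjoint hqne hqU hU hdisj).mono inter_subset_left Subset.rfl)

theorem cluLT_runClu_runClu (h : IsRegular Γ M k) {p q : Clu}
    (hR : IsRun (heavy Γ M k) (M ^ (k + 1)) R) (hR' : IsRun (heavy Γ M k) (M ^ (k + 1)) R')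
    (hfin : R.Finite) (hne : R ≠ R') (hp : p ∈ R) (hq : q ∈ R') (hpq : cluLT p.1 q.1) :
    cluLT (runClu Γ k R).1 (runClu Γ k R').1 :=
  ((hR.cluLT_biUnion hR' h.isSeparated_heavy hne hp hq hpq).spanI_spanI
    (h.finite_biUnion hR.subset hfin) (h.nonempty_biUnion hR) (h.nonempty_biUnion hR')).mono
    inter_subset_left inter_subset_left

theorem runClu_cluLT_or_cluLT_runClu (h : IsRegular Γ M k)
    (hR : IsRun (heavy Γ M k) (M ^ (k + 1)) R) (hR' : IsRun (heavy Γ M k) (M ^ (k + 1)) R')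
    (hfin : R.Finite) (hfin' : R'.Finite) (hne : R ≠ R') :
    cluLT (runClu Γ k R).1 (runClu Γ k R').1 ∨ cluLT (runClu Γ k R').1 (runClu Γ k R).1 := by
  obtain ⟨p, hp⟩ := hR.nonempty
  obtain ⟨q, hq⟩ := hR'.nonempty
  have hpq : p ≠ q := by
    rintro rfl
    exact hne (hR.eq_of_mem hR' hp hq)
  exact (h.isSeparated_heavy.pairwise (hR.subset hp) (hR'.subset hq) hpq).imp
    (h.cluLT_runClu_runClu hR hR' hfin hne hp hq)
    (h.cluLT_runClu_runClu hR' hR hfin' hne.symm hq hp)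

theorem zero (Γ : Set ℕ) (M : ℕ) : IsRegular Γ M 0 where
  isSeparated := by
    refine ⟨?_, ?_, ?_⟩
    · rintro _ ⟨⟨x, -, rfl⟩, -⟩
      exact singleton_nonempty x
    · rintro _ ⟨⟨x, -, rfl⟩, -⟩
      exact finite_singleton x
    · rintro _ ⟨⟨x, -, rfl⟩, -⟩ _ ⟨⟨y, -, rfl⟩, -⟩ hne
      have hxy : x ≠ y := by rintro rfl; exact hne rfl
      simpa [cluLT] using hxy.lt_or_gt
  subset := by
    rintro _ ⟨⟨x, hx, rfl⟩, -⟩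
    exact singleton_subset_iff.2 hx
  exists_skeleton := by
    rintro _ ⟨⟨x, -, rfl⟩, -⟩
    exact ⟨{x}, ⟨rfl, x, rfl⟩, by simp, by simp, by simp⟩

theorem isSeparated_succ (h : IsRegular Γ M k) (hΓ : 0 ∉ Γ) :
    IsSeparated (clusters Γ M (k + 1)) := by
  refine ⟨fun c hc => ?_, fun c hc => ?_, fun c hc d hd hne => ?_⟩
  · rcases h.mem_clusters_succ hΓ hc with ⟨R, hR, hfin, rfl⟩ | ⟨hc, -⟩
    · obtain ⟨S, -, hframe⟩ := h.exists_runSkeleton_runClu hR hfin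
      exact hframe.nonempty
    · exact h.isSeparated.nonempty c hc
  · rcases h.mem_clusters_succ hΓ hc with ⟨R, -, -, rfl⟩ | ⟨hc, -⟩
    · exact (finite_Icc _ _).subset inter_subset_left
    · exact h.isSeparated.finite c hc
  · rcases h.mem_clusters_succ hΓ hc with ⟨R, hR, hfin, rfl⟩ | ⟨hc, hcdisj⟩ <;>
      rcases h.mem_clusters_succ hΓ hd with ⟨R', hR', hfin', rfl⟩ | ⟨hd, hddisj⟩
    · exact h.runClu_cluLT_or_cluLT_runClu hR hR' hfin hfin' fun hRR' => hne (by rw [hRR'])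
    · exact (h.cluLT_or_cluLT_runClu hd hR hfin (hddisj R hR)).symm
    · exact h.cluLT_or_cluLT_runClu hc hR' hfin' (hcdisj R' hR')
    · exact h.isSeparated.pairwise hc hd hne

theorem succ (h : IsRegular Γ M k) (hΓ : 0 ∉ Γ) : IsRegular Γ M (k + 1) where
  isSeparated := h.isSeparated_succ hΓ
  subset c hc := by
    rcases h.mem_clusters_succ hΓ hc with ⟨R, -, -, rfl⟩ | ⟨hc, -⟩
    · exact inter_subset_right
    · exact h.subset c hc
  exists_skeleton c hc := by
    rcases h.mem_clusters_succ hΓ hc with ⟨R, hR, hfin, rfl⟩ | ⟨hc, -⟩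
    · obtain ⟨S, hS, hframe⟩ := h.exists_runSkeleton_runClu hR hfin
      exact ⟨S, Or.inr hS, hframe⟩
    · obtain ⟨S, hS, hframe⟩ := h.exists_skeleton c hc
      exact ⟨S, Or.inl hS, hframe⟩

end IsRegular

theorem isRegular_of_zero_notMem (hΓ : 0 ∉ Γ) : ∀ k, IsRegular Γ M k
  | 0 => .zero Γ M
  | k + 1 => (isRegular_of_zero_notMem hΓ k).succ hΓ

theorem IsLevelCluster.le_mass {ℓ : ℕ} (hΓ : 0 ∉ Γ) (hc : IsLevelCluster Γ M ℓ c)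
    (hne : c.1.Nonempty) : ℓ ≤ c.2 := by
  rcases ℓ with _ | k
  · exact Nat.zero_le _
  · have hmem : c ∈ clusters Γ M (k + 1) := ⟨hc.1, by rintro rfl; exact hne.ne_empty rfl⟩
    have hreg : IsRegular Γ M k := isRegular_of_zero_notMem hΓ k
    rcases hreg.mem_clusters_succ hΓ hmem with ⟨R, hR, hfin, rfl⟩ | ⟨hold, -⟩
    · obtain ⟨S, hS, -⟩ := hreg.exists_runSkeleton_runClu hR hfin
      exact hS.le_mass
    · exact absurd hold.1 (hc.2 k k.lt_succ_self)

end Regular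
/-! ### Early skeletons -/

section EarlySkeletons

variable {Γ : Set ℕ} {M : ℕ}

/-- The skeletons of clusters of mass `m` in `𝐂_k` that start before `M ^ m`. -/
def earlySkeletons (M k m : ℕ) : Set (Finset ℕ) :=
  ⋃ x ∈ Finset.range (M ^ m), startingAt (skeletons M k m) x

/-- `Γ` contains a skeleton of mass `m` that starts before `M ^ m`, so that a cluster of mass `m`
may come too close to the origin. -/
def HasEarlySkeleton (Γ : Set ℕ) (M m : ℕ) : Prop := ∃ k, ∃ S ∈ earlySkeletons M k m, ↑S ⊆ Γ

theorem pow_mass_le_sInf {k : ℕ} {c : Clu} (hΓ : 0 ∉ Γ) (hc : c ∈ clusters Γ M k)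
    (h : ¬HasEarlySkeleton Γ M c.2) : M ^ c.2 ≤ sInf c.1 := by
  obtain ⟨S, hS, hframe⟩ := (isRegular_of_zero_notMem hΓ k).exists_skeleton c hc
  by_contra! hlt
  exact h ⟨k, S, mem_iUnion₂.2 ⟨_, Finset.mem_range.2 hlt, hS, hframe.isLeast⟩,
    hframe.subset.trans ((isRegular_of_zero_notMem hΓ k).subset c hc)⟩

theorem chiCond_of_not_hasEarlySkeleton {k : ℕ} (hΓ : 0 ∉ Γ)
    (h : ∀ m, k < m → ¬HasEarlySkeleton Γ M m) : ChiCond Γ M k := by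
  rintro c ⟨ℓ, hℓ⟩ hkc
  exact pow_mass_le_sInf hΓ (mem_clusters_of_mass_pos (hℓ ℓ le_rfl) (Nat.zero_lt_of_lt hkc))
    (h c.2 hkc)

theorem kappaFinite_of_not_hasEarlySkeleton {k : ℕ} (hM : 2 ≤ M) (hΓ : 0 ∉ Γ)
    (h : ∀ m, k < m → ¬HasEarlySkeleton Γ M m) (x : ℕ) : KappaFinite Γ M x := by
  refine ⟨max k x, ?_⟩
  rintro ℓ ⟨c, hc, hx⟩
  have hℓ : ℓ ≤ c.2 := hc.le_mass hΓ ⟨x, hx⟩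
  by_contra! hlt
  have hmem : c ∈ clusters Γ M ℓ := mem_clusters_of_mass_pos hc.1 (by omega)
  have hfar : M ^ c.2 ≤ sInf c.1 := pow_mass_le_sInf hΓ hmem (h c.2 (by omega))
  have hpow : c.2 < M ^ c.2 := Nat.lt_pow_self hM
  have hinf : sInf c.1 ≤ x := Nat.sInf_le hx
  omega

end EarlySkeletons

/-! ### The random set of ones -/

section Probability

variable {M k m : ℕ} {q : ℝ≥0∞}

theorem zero_notMem_Gamma (ξ : ℕ → Bool) : 0 ∉ Gamma ξ := fun h => absurd h.1 (by decide)

theorem goodSeq_and_chiCond_of_not_hasEarlySkeleton {ξ : ℕ → Bool} (hM : 2 ≤ M)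
    (h : ∀ m, k < m → ¬HasEarlySkeleton (Gamma ξ) M m) :
    GoodSeq M ξ ∧ ChiCond (Gamma ξ) M k :=
  ⟨fun x _ => kappaFinite_of_not_hasEarlySkeleton hM (zero_notMem_Gamma ξ) h x,
    chiCond_of_not_hasEarlySkeleton (zero_notMem_Gamma ξ) h⟩

theorem measure_subset_Gamma_le {μ : Measure (ℕ → Bool)}
    (hμ : ∀ s : Finset ℕ, μ {ξ | ∀ i ∈ s, ξ i = true} ≤ q ^ s.card) (S : Finset ℕ) :
    μ {ξ | ↑S ⊆ Gamma ξ} ≤ q ^ S.card := by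
  by_cases h0 : 0 ∈ S
  · have hempty : {ξ | ↑S ⊆ Gamma ξ} = ∅ :=
      eq_empty_of_forall_notMem fun ξ hξ => zero_notMem_Gamma ξ (hξ h0)
    rw [hempty, measure_empty]
    exact zero_le
  · have hcard : (S.image Nat.pred).card = S.card :=
      Finset.card_image_of_injOn fun a ha b hb hab =>
        Nat.pred_inj (Nat.pos_of_ne_zero (ne_of_mem_of_not_mem ha h0))
          (Nat.pos_of_ne_zero (ne_of_mem_of_not_mem hb h0)) hab
    rw [← hcard]
    refine (measure_mono fun ξ hξ => ?_).trans (hμ _)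
    simp only [mem_ofPred_eq, Finset.forall_mem_image]
    exact fun a ha => (hξ ha).2

theorem weight_earlySkeletons_le (hM : 1 ≤ M) (hq : (M : ℝ≥0∞) ^ 2 * q ≤ 64⁻¹) (k m : ℕ) :
    weight q (earlySkeletons M k m) ≤ 16⁻¹ ^ m := by
  calc
    weight q (earlySkeletons M k m) ≤ (M : ℝ≥0∞) ^ m * rootedWeight q (skeletons M k m) := by
      rw [← Nat.cast_pow, ← Finset.card_range (M ^ m)]
      exact weight_biUnion_startingAt_le _ _
    _ ≤ (M : ℝ≥0∞) ^ (m + 1) * rootedWeight q (skeletons M k m) := by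
      gcongr
      · exact_mod_cast hM
      · omega
    _ ≤ activity ((M : ℝ≥0∞) ^ 2 * q) k ^ m := pow_mul_rootedWeight_skeletons_le k m
    _ ≤ 16⁻¹ ^ m := by gcongr; exact activity_le hq k

theorem measure_hasEarlySkeleton_le {Ω : Type*} [MeasurableSpace Ω] {μ : Measure Ω}
    {X : Ω → Set ℕ} (hX : ∀ S : Finset ℕ, μ {ω | ↑S ⊆ X ω} ≤ q ^ S.card) (hM : 1 ≤ M)
    (hq : (M : ℝ≥0∞) ^ 2 * q ≤ 64⁻¹) (m : ℕ) :
    μ {ω | HasEarlySkeleton (X ω) M m} ≤ 16⁻¹ ^ m := by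
  have hmono : Monotone fun k => {ω | ∃ S ∈ earlySkeletons M k m, ↑S ⊆ X ω} :=
    monotone_nat_of_le_succ fun k ω ⟨S, hS, hSX⟩ =>
      let ⟨x, hx, hSx⟩ := mem_iUnion₂.1 hS
      ⟨S, mem_iUnion₂.2 ⟨x, hx, skeletons_subset_succ M k m hSx.1, hSx.2⟩, hSX⟩
  have hunion : {ω | HasEarlySkeleton (X ω) M m} =
      ⋃ k, {ω | ∃ S ∈ earlySkeletons M k m, ↑S ⊆ X ω} := ofPred_exists _
  rw [hunion, hmono.measure_iUnion]
  exact iSup_le fun k =>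
    (measure_exists_subset_le_weight hX _).trans (weight_earlySkeletons_le hM hq k m)

theorem tsum_inv_sixteen_pow_succ_lt_one : ∑' m : ℕ, (16⁻¹ : ℝ≥0∞) ^ (m + 1) < 1 := by
  have hlt : (16⁻¹ : ℝ≥0∞) < 1 - 16⁻¹ :=
    calc
      (16⁻¹ : ℝ≥0∞) < 2⁻¹ := ENNReal.inv_lt_inv.2 (by norm_num)
      _ = 1 - 2⁻¹ := ENNReal.one_sub_inv_two.symm
      _ ≤ 1 - 16⁻¹ := tsub_le_tsub_left (ENNReal.inv_le_inv.2 (by norm_num)) 1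
  rw [ENNReal.tsum_geometric_add_one, ← div_eq_mul_inv]
  exact ENNReal.div_lt_of_lt_mul' (by rwa [mul_one])

theorem measure_forall_notMem_pos {Ω : Type*} [MeasurableSpace Ω] {μ : Measure Ω}
    [IsProbabilityMeasure μ] {E : ℕ → Set Ω} (hE : ∑' m, μ (E m) < 1) :
    0 < μ {ω | ∀ m, ω ∉ E m} := by
  have hcompl : (⋃ m, E m)ᶜ = {ω | ∀ m, ω ∉ E m} := by ext; simp
  rw [pos_iff_ne_zero, ← hcompl]
  intro h0
  have hone : 1 ≤ μ (⋃ m, E m) := by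
    rw [← measure_univ (μ := μ), ← add_zero (μ (⋃ m, E m)), ← h0]
    exact measure_univ_le_add_compl _
  exact (hone.trans (measure_iUnion_le E)).not_gt hE

end Probability

theorem statement_15_general (M : ℕ) (hM : 2 ≤ M) (p : ℝ≥0) (hp : p ≤ 1 / (64 * (M : ℝ≥0) ^ 2))
    (μ : Measure (ℕ → Bool)) [IsProbabilityMeasure μ]
    (hμ : ∀ s : Finset ℕ, μ {ξ | ∀ i ∈ s, ξ i = true} ≤ (p : ℝ≥0∞) ^ s.card) :
    μ {ξ | GoodSeq M ξ ∧ ∃ k, ChiCond (Gamma ξ) M k} = 1 ∧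
    0 < μ {ξ | GoodSeq M ξ ∧ ChiCond (Gamma ξ) M 0} := by
  have hq : (M : ℝ≥0∞) ^ 2 * p ≤ 64⁻¹ := by
    rw [one_div, mul_inv, ← div_eq_mul_inv, le_div_iff₀' (by positivity)] at hp
    simpa using ENNReal.coe_le_coe.2 hp
  have hearly : ∑' m, μ {ξ | HasEarlySkeleton (Gamma ξ) M (m + 1)} < 1 :=
    (ENNReal.tsum_le_tsum fun m => measure_hasEarlySkeleton_le (measure_subset_Gamma_le hμ)
      (by omega) hq (m + 1)).trans_lt tsum_inv_sixteen_pow_succ_lt_one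
  have hgood : ∀ ξ k, (∀ m, k ≤ m → ¬HasEarlySkeleton (Gamma ξ) M (m + 1)) →
      GoodSeq M ξ ∧ ChiCond (Gamma ξ) M k := fun ξ k h =>
    goodSeq_and_chiCond_of_not_hasEarlySkeleton hM fun
      | m + 1, hm => h m (Nat.le_of_lt_succ hm)
  constructor
  · have hae : ∀ᵐ ξ ∂μ, GoodSeq M ξ ∧ ∃ k, ChiCond (Gamma ξ) M k := by
      filter_upwards [ae_eventually_notMem (hearly.trans_le le_top).ne] with ξ hξ
      obtain ⟨k, hk⟩ := eventually_atTop.1 hξ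
      exact ⟨(hgood ξ k hk).1, k, (hgood ξ k hk).2⟩
    exact (measure_congr (eventuallyEq_univ.2 hae)).trans measure_univ
  · exact (measure_forall_notMem_pos hearly).trans_le
      (measure_mono fun ξ hξ => hgood ξ 0 fun m _ => hξ m)

theorem statement_15 (M : ℕ) (hM : 3 ≤ M) (p : ℝ) (hp0 : 0 < p)
    (hp : p < 1 / (64 * (M : ℝ) ^ 2))
    (μ : Measure (ℕ → Bool)) (hμ : IsBernoulliProduct μ p) :
    μ {ξ | GoodSeq M ξ ∧ ∃ k, ChiCond (Gamma ξ) M k} = 1 ∧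
    0 < μ {ξ | GoodSeq M ξ ∧ ChiCond (Gamma ξ) M 0} := by
  have := hμ.1
  exact statement_15_general M (by omega) (.mk p hp0.le) hp.le μ fun s => by
    simpa [ENNReal.ofReal_eq_coe_nnreal hp0.le] using (hμ.2 s fun _ => true).le

end Paper
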